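/- arXiv:2312.08930 — 4 statements merged into one kernel-verified Lean document; each statement's English description precedes it below -/
import Mathlib

section
/- Let p and q be distinct primes with q dividing p − 1, and let G be a nonabelian group of order pq. Then the conjugacy super commuting graph Δ^c(G) is isomorphic to the generalized join K_{1,2}[K_1, K_{p−1}, K_{pq−p}], with K_1 placed at the central vertex of the star K_{1,2}. -/
/-!
The blocks of the join are `{1}`, `P \ {1}` and `G \ P`, where `P` is the normal subgroup of order
`p`. More generally, let `P` be a commutative normal subgroup of a finite group `G` such that
`G ⧸ P` is cyclic and no element outside `P` commutes with a nontrivial element of `P`; in other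
words, `P` is a Frobenius kernel, allowing the degenerate cases `P = 1` and `P = G`.

For `x ∉ P`, conjugation by `x` fixes only `1` in `P`, so the commutators of the elements of `P`
with `x` are pairwise distinct and exhaust `P`: the coset of `x` consists of conjugates of `x`.
If `g` generates `G` modulo `P`, every element outside `P` is therefore conjugate to a power of
`g`, and powers of `g` commute. Hence `G \ P` is a clique. There is no edge between `P \ {1}` and
`G \ P`, since both sets are closed under conjugation and no element of one commutes with an
element of the other.
-/

open Polynomial

noncomputable section
open scoped Classical

/-- The adjacency matrix (over ℝ) of a finite simple graph. -/
def adjMat {V : Type*} [Fintype V] (Γ : SimpleGraph V) : Matrix V V ℝ :=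
  fun u v => if Γ.Adj u v then 1 else 0

/-- The Laplacian matrix `D − A` of a finite simple graph, where `D` is the diagonal
matrix of vertex degrees. -/
def lapMat {V : Type*} [Fintype V] (Γ : SimpleGraph V) : Matrix V V ℝ :=
  Matrix.diagonal (fun v => ((Finset.univ.filter fun u => Γ.Adj v u).card : ℝ)) - adjMat Γ

/-- The `R`-super graph of `Γ`: two distinct vertices are adjacent iff they are
`R`-equivalent or some members of their respective `R`-classes are adjacent in `Γ`. -/
def superGraph {V : Type*} (Γ : SimpleGraph V) (R : Setoid V) : SimpleGraph V :=
  SimpleGraph.fromRel fun u v =>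
    R.r u v ∨ ∃ u' v', R.r u u' ∧ R.r v v' ∧ Γ.Adj u' v'

/-- The `R`-compressed graph of `Γ`, on the set of `R`-classes: two distinct classes are
adjacent iff some vertex of one is adjacent in `Γ` to some vertex of the other. -/
def compressedGraph {V : Type*} (Γ : SimpleGraph V) (R : Setoid V) :
    SimpleGraph (Quotient R) :=
  SimpleGraph.fromRel fun c d => ∃ x y, Quotient.mk R x = c ∧ Quotient.mk R y = d ∧ Γ.Adj x y

/-- The generalized join `I[K_{n i}]` of complete graphs along the graph `I`:
the vertex `i` of `I` is replaced by the complete graph on `Fin (n i)`, and all edges are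
put between the `i`-th and `j`-th complete graphs whenever `i` and `j` are adjacent in `I`. -/
def genJoinK {ι : Type*} (I : SimpleGraph ι) (n : ι → ℕ) : SimpleGraph (Σ i, Fin (n i)) :=
  SimpleGraph.fromRel fun a b => a.1 = b.1 ∨ I.Adj a.1 b.1

/-- The star graph `K_{1,k-1}` on `Fin k`, whose central vertex is the one with value `0`. -/
def starGraph (k : ℕ) : SimpleGraph (Fin k) :=
  SimpleGraph.fromRel fun a _b => a.val = 0

/-- The order super commuting graph `Δ^o(G)`: distinct `x, y` are adjacent iff
`o(x) = o(y)` or some distinct commuting `x', y'` satisfy `o(x') = o(x)` and `o(y') = o(y)`. -/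
def orderSuper (G : Type*) [Group G] : SimpleGraph G :=
  SimpleGraph.fromRel fun x y =>
    orderOf x = orderOf y ∨
      ∃ x' y' : G, x' ≠ y' ∧ x' * y' = y' * x' ∧ orderOf x' = orderOf x ∧ orderOf y' = orderOf y

/-- The conjugacy super commuting graph `Δ^c(G)`: distinct `x, y` are adjacent iff
`x` is conjugate to `y` or some distinct commuting `x', y'` are conjugate to `x` and `y`
respectively. -/
def conjSuper (G : Type*) [Group G] : SimpleGraph G :=
  SimpleGraph.fromRel fun x y =>
    IsConj x y ∨ ∃ x' y' : G, x' ≠ y' ∧ x' * y' = y' * x' ∧ IsConj x x' ∧ IsConj y y'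

lemma nonempty_iso_genJoinK {V ι : Type*} [Finite V] (Γ : SimpleGraph V) (I : SimpleGraph ι)
    (n : ι → ℕ) (f : V → ι) (hcard : ∀ i, Nat.card {x // f x = i} = n i)
    (hadj : ∀ x y, x ≠ y → (Γ.Adj x y ↔ f x = f y ∨ I.Adj (f x) (f y))) :
    Nonempty (Γ ≃g genJoinK I n) := by
  let e : V ≃ Σ i, Fin (n i) := (Equiv.sigmaFiberEquiv f).symm.trans
    (Equiv.sigmaCongrRight fun i => Finite.equivFinOfCardEq (hcard i))
  have fst_e (x : V) : (e x).1 = f x := rfl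
  refine ⟨⟨e, fun {x y} => ?_⟩⟩
  rcases eq_or_ne x y with rfl | hxy
  · simp only [SimpleGraph.irrefl]
  · simp only [genJoinK, SimpleGraph.fromRel_adj, fst_e, ne_eq, e.injective.eq_iff, hxy,
      not_false_eq_true, true_and, eq_comm (a := f y), I.adj_comm (f y), or_self, hadj x y hxy]

section Block

variable {G : Type*} [Group G] (P : Subgroup G)

/-- The index of the block of the partition `G = {1} ∪ (P \ {1}) ∪ (G \ P)` containing `x`. The
blocks are numbered as vertices of `starGraph 3`, so that `{1}` sits at the centre `0`. -/
def block (x : G) : Fin 3 :=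
  if x = 1 then 0 else if x ∈ P then 1 else 2

lemma block_eq_zero_iff {x : G} : block P x = 0 ↔ x = 1 := by
  unfold block; split_ifs <;> simp_all

lemma block_eq_one_iff {x : G} : block P x = 1 ↔ x ∈ P ∧ x ≠ 1 := by
  unfold block; split_ifs <;> simp_all

lemma block_eq_two_iff {x : G} : block P x = 2 ↔ x ∉ P := by
  unfold block; split_ifs <;> simp_all [P.one_mem]

lemma card_block_fiber [Finite G] (i : Fin 3) :
    Nat.card {x // block P x = i} = ![1, Nat.card P - 1, Nat.card G - Nat.card P] i := by
  fin_cases i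
  · simp [block_eq_zero_iff]
  · simp only [Fin.mk_one, block_eq_one_iff]
    exact Set.ncard_sdiff_singleton_of_mem P.one_mem
  · simp only [Fin.reduceFinMk, block_eq_two_iff]
    exact Set.ncard_compl (P : Set G)

lemma block_eq_or_starGraph_adj_iff (x y : G) :
    block P x = block P y ∨ (starGraph 3).Adj (block P x) (block P y) ↔
      x = 1 ∨ y = 1 ∨ (x ∈ P ↔ y ∈ P) := by
  unfold block
  split_ifs <;> simp_all [starGraph]

end Block

section ConjugacySuperCommuting

variable {G : Type*} [Group G]

lemma conjSuper_adj_iff {x y : G} :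
    (conjSuper G).Adj x y ↔ x ≠ y ∧ ∃ x' y', IsConj x x' ∧ IsConj y y' ∧ Commute x' y' := by
  simp only [conjSuper, SimpleGraph.fromRel_adj]
  refine and_congr_right fun _ => ⟨?_, ?_⟩
  · rintro ((hxy | ⟨x', y', -, hcomm, hx, hy⟩) | hyx | ⟨y', x', -, hcomm, hy, hx⟩)
    · exact ⟨y, y, hxy, .refl y, .refl y⟩
    · exact ⟨x', y', hx, hy, hcomm⟩
    · exact ⟨y, y, hyx.symm, .refl y, .refl y⟩
    · exact ⟨x', y', hx, hy, hcomm.symm⟩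
  · rintro ⟨x', y', hx, hy, hcomm⟩
    rcases eq_or_ne x' y' with rfl | hne
    · exact .inl (.inl (hx.trans hy.symm))
    · exact .inl (.inr ⟨x', y', hne, hcomm, hx, hy⟩)

lemma conjSuper_adj_of_commute {x y : G} (hne : x ≠ y) (hcomm : Commute x y) :
    (conjSuper G).Adj x y :=
  conjSuper_adj_iff.2 ⟨hne, x, y, .refl x, .refl y, hcomm⟩

variable {P : Subgroup G} [P.Normal]

lemma mem_iff_of_isConj {x y : G} (h : IsConj x y) : x ∈ P ↔ y ∈ P := by
  obtain ⟨g, rfl⟩ := isConj_iff.1 h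
  rw [‹P.Normal›.mem_comm_iff, inv_mul_cancel_left]

lemma isConj_of_mk_eq_mk [Finite P] {x y : G} (hx : Disjoint P (Subgroup.centralizer {x}))
    (hxy : (x : G ⧸ P) = y) : IsConj x y := by
  have hfree : MonoidHom.FixedPointFree (MulAut.conjNormal x : MulAut P) := fun u hu => by
    have hfix : x * u * x⁻¹ = u := by rw [← MulAut.conjNormal_apply, hu]
    exact Subtype.ext <| Subgroup.disjoint_def.1 hx u.2 <|
      Subgroup.mem_centralizer_singleton_iff.2 (mul_inv_eq_iff_eq_mul.1 hfix).symm
  have hmem : y * x⁻¹ ∈ P := Subgroup.Normal.mem_comm ‹_› (QuotientGroup.eq.1 hxy)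
  obtain ⟨u, hu⟩ := hfree.commutatorMap_surjective ⟨y * x⁻¹, hmem⟩
  have hcommutator : u / (x * u * x⁻¹ : G) = y * x⁻¹ := by
    simpa [MulAut.conjNormal_apply] using congrArg Subtype.val hu
  refine isConj_iff.2 ⟨u, ?_⟩
  rw [← mul_left_inj x⁻¹, ← hcommutator, div_eq_mul_inv]
  group

lemma mem_iff_of_conjSuper_adj (hP : ∀ x ∉ P, Disjoint P (Subgroup.centralizer {x})) {x y : G}
    (hx : x ≠ 1) (hy : y ≠ 1) (hadj : (conjSuper G).Adj x y) : x ∈ P ↔ y ∈ P := by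
  have mem_of_commute {u v : G} (hu : u ≠ 1) (huP : u ∈ P) (hcomm : Commute u v) : v ∈ P := by
    by_contra hv
    exact hu (Subgroup.disjoint_def.1 (hP v hv) huP
      (Subgroup.mem_centralizer_singleton_iff.2 hcomm))
  obtain ⟨-, x', y', hxx', hyy', hcomm⟩ := conjSuper_adj_iff.1 hadj
  have hx' : x' ≠ 1 := fun h => hx (isConj_one_left.1 (h ▸ hxx'))
  have hy' : y' ≠ 1 := fun h => hy (isConj_one_left.1 (h ▸ hyy'))
  rw [mem_iff_of_isConj hxx', mem_iff_of_isConj hyy']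
  exact ⟨fun h => mem_of_commute hx' h hcomm, fun h => mem_of_commute hy' h hcomm.symm⟩

lemma conjSuper_adj_of_notMem [Finite P] [IsCyclic (G ⧸ P)]
    (hP : ∀ x ∉ P, Disjoint P (Subgroup.centralizer {x})) {x y : G} (hne : x ≠ y) (hx : x ∉ P)
    (hy : y ∉ P) : (conjSuper G).Adj x y := by
  obtain ⟨γ, hγ⟩ := IsCyclic.exists_generator (α := G ⧸ P)
  obtain ⟨g, rfl⟩ := QuotientGroup.mk_surjective γ
  have exists_isConj_zpow {z : G} (hz : z ∉ P) : ∃ k : ℤ, IsConj z (g ^ k) := by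
    obtain ⟨k, hk⟩ := Subgroup.mem_zpowers_iff.1 (hγ z)
    exact ⟨k, isConj_of_mk_eq_mk (hP z hz) (by rw [← hk, QuotientGroup.mk_zpow])⟩
  obtain ⟨i, hi⟩ := exists_isConj_zpow hx
  obtain ⟨j, hj⟩ := exists_isConj_zpow hy
  exact conjSuper_adj_iff.2 ⟨hne, g ^ i, g ^ j, hi, hj, Commute.zpow_zpow_self g i j⟩

lemma conjSuper_adj_iff_of_disjoint_centralizer [Finite P] [IsMulCommutative P] [IsCyclic (G ⧸ P)]
    (hP : ∀ x ∉ P, Disjoint P (Subgroup.centralizer {x})) {x y : G} (hne : x ≠ y) :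
    (conjSuper G).Adj x y ↔ x = 1 ∨ y = 1 ∨ (x ∈ P ↔ y ∈ P) := by
  constructor
  · intro hadj
    refine or_iff_not_imp_left.2 fun hx => or_iff_not_imp_left.2 fun hy => ?_
    exact mem_iff_of_conjSuper_adj hP hx hy hadj
  · rintro (rfl | rfl | hmem)
    · exact conjSuper_adj_of_commute hne (Commute.one_left y)
    · exact conjSuper_adj_of_commute hne (Commute.one_right x)
    by_cases hx : x ∈ P
    · exact conjSuper_adj_of_commute hne (Subgroup.le_centralizer P (hmem.1 hx) x hx)
    · exact conjSuper_adj_of_notMem hP hne hx (mt hmem.2 hx)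

end ConjugacySuperCommuting

section PrimeIndex

variable {G : Type*} [Group G] {P : Subgroup G}

lemma normal_of_isPGroup_of_index_lt {p : ℕ} [Fact p.Prime] [P.FiniteIndex] (hP : IsPGroup p P)
    (hlt : P.index < p) : P.Normal := by
  have hpos : 0 < P.index := Nat.pos_of_ne_zero Subgroup.FiniteIndex.index_ne_zero
  let S : Sylow p G := hP.toSylow (Nat.not_dvd_of_pos_of_lt hpos hlt)
  have : (S : Subgroup G).FiniteIndex := ‹P.FiniteIndex›
  have : Finite (Sylow p G) := S.finite_of_finiteIndex
  have hcard_lt : Nat.card (Sylow p G) < p := (Nat.le_of_dvd hpos S.card_dvd_index).trans_lt hlt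
  have hcard : Nat.card (Sylow p G) = 1 :=
    (card_sylow_modEq_one p G).eq_of_lt_of_lt hcard_lt (Fact.out : p.Prime).one_lt
  have : Subsingleton (Sylow p G) := (Nat.card_eq_one_iff_unique.1 hcard).1
  exact S.normal_of_subsingleton

lemma isCoatom_of_prime_index (hP : P.index.Prime) : IsCoatom P := by
  refine ⟨fun h => hP.ne_one (Subgroup.index_eq_one.2 h), fun K hK => ?_⟩
  have : P.FiniteIndex := ⟨hP.ne_zero⟩
  exact Subgroup.index_eq_one.1 <|
    (hP.eq_one_or_self_of_dvd _ (Subgroup.index_dvd_of_le hK.le)).resolve_right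
      (Subgroup.index_strictAnti hK).ne

lemma isCyclic_quotient_of_prime_index [P.Normal] (hP : P.index.Prime) : IsCyclic (G ⧸ P) :=
  have := Fact.mk hP
  isCyclic_of_prime_card P.index_eq_card.symm

/-- If `x ∉ P` commutes with a nontrivial element of `P`, then it centralizes `P`. So does `P`
itself, hence `P` is central by maximality, and `G ⧸ P` being cyclic makes `G` commutative. -/
lemma disjoint_centralizer_of_prime_card_of_prime_index [P.Normal] (hcard : (Nat.card P).Prime)
    (hindex : P.index.Prime) (hG : ¬ IsMulCommutative G) {x : G} (hx : x ∉ P) :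
    Disjoint P (Subgroup.centralizer {x}) := by
  have := Fact.mk hcard
  have := isCyclic_of_prime_card (α := P) rfl
  have := isCyclic_quotient_of_prime_index hindex
  by_contra hdisj
  have hle_x : P ≤ Subgroup.centralizer {x} := by
    rw [← Subgroup.subgroupOf_eq_top]
    refine (Subgroup.eq_bot_or_eq_top_of_prime_card _).resolve_left fun h => hdisj ?_
    exact (Subgroup.subgroupOf_eq_bot.1 h).symm
  have hx_mem : x ∈ Subgroup.centralizer P := fun u hu =>
    Subgroup.mem_centralizer_singleton_iff.1 (hle_x hu)
  have hlt : P < Subgroup.centralizer P :=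
    lt_of_le_of_ne (Subgroup.le_centralizer P) fun h => hx (h ▸ hx_mem)
  have hcenter : P ≤ Subgroup.center G :=
    Subgroup.centralizer_eq_top_iff_subset.1 ((isCoatom_of_prime_index hindex).2 _ hlt)
  exact hG ((QuotientGroup.mk' P).isMulCommutative_of_isCyclic_of_ker_le_center
    (by rwa [QuotientGroup.ker_mk']))

lemma exists_normal_disjoint_centralizer_of_card_eq_mul {p q : ℕ} (hp : p.Prime) (hq : q.Prime)
    (hlt : q < p) (hcard : Nat.card G = p * q) (hG : ¬ IsMulCommutative G) :
    ∃ P : Subgroup G, ∃ _ : P.Normal, Nat.card P = p ∧ IsMulCommutative P ∧ IsCyclic (G ⧸ P) ∧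
      ∀ x ∉ P, Disjoint P (Subgroup.centralizer {x}) := by
  have := Fact.mk hp
  have : Finite G := Nat.finite_of_card_ne_zero (hcard ▸ mul_ne_zero hp.ne_zero hq.ne_zero)
  obtain ⟨P, hP⟩ : ∃ P : Subgroup G, Nat.card P = p := by
    simpa using Sylow.exists_subgroup_card_pow_prime (G := G) p (n := 1) (by simp [hcard])
  have hindex : P.index = q :=
    Nat.eq_of_mul_eq_mul_left hp.pos (by rw [← hcard, ← P.card_mul_index, hP])
  have hnormal : P.Normal :=
    normal_of_isPGroup_of_index_lt (.of_card (n := 1) (by rw [hP, pow_one])) (hindex ▸ hlt)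
  have := isCyclic_of_prime_card hP
  exact ⟨P, hnormal, hP, inferInstance, isCyclic_quotient_of_prime_index (hindex ▸ hq),
    fun x => disjoint_centralizer_of_prime_card_of_prime_index (hP ▸ hp) (hindex ▸ hq) hG⟩

end PrimeIndex

theorem stmt_16_general {G : Type*} [Group G] [Finite G] (P : Subgroup G) [P.Normal]
    [IsMulCommutative P] [IsCyclic (G ⧸ P)]
    (hP : ∀ x ∉ P, Disjoint P (Subgroup.centralizer {x})) :
    Nonempty (conjSuper G ≃g
      genJoinK (starGraph 3) ![1, Nat.card P - 1, Nat.card G - Nat.card P]) :=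
  nonempty_iso_genJoinK _ _ _ (block P) (card_block_fiber P) fun x y hne =>
    (conjSuper_adj_iff_of_disjoint_centralizer hP hne).trans
      (block_eq_or_starGraph_adj_iff P x y).symm

/-- The conjugacy super commuting graph of a nonabelian group of order `pq`, with `p, q`
distinct primes such that `q ∣ p − 1`, is isomorphic to `K_{1,2}[K_1, K_{p−1}, K_{pq−p}]`,
with `K_1` at the central vertex of the star. -/
theorem stmt_16 (p q : ℕ) (hp : p.Prime) (hq : q.Prime) (hpq : p ≠ q) (hdvd : q ∣ p - 1)
    (G : Type*) [Group G] [Fintype G] (hcard : Fintype.card G = p * q)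
    (hnab : ∃ x y : G, x * y ≠ y * x) :
    Nonempty (conjSuper G ≃g genJoinK (starGraph 3) ![1, p - 1, p * q - p]) := by
  have hlt : q < p := by
    have := Nat.le_of_dvd (Nat.sub_pos_of_lt hp.one_lt) hdvd
    have := hp.pos
    omega
  have hcard' : Nat.card G = p * q := Nat.card_eq_fintype_card.trans hcard
  have hG : ¬ IsMulCommutative G := fun _ =>
    let ⟨x, y, hxy⟩ := hnab
    hxy (mul_comm' x y)
  obtain ⟨P, _, hP, _, _, hdisj⟩ :=
    exists_normal_disjoint_centralizer_of_card_eq_mul hp hq hlt hcard' hG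
  rw [← hcard', ← hP]
  exact stmt_16_general P hdisj
end
end

section
/- Let n ≥ 4 be even and let D_{2n} be the dihedral group of order 2n. Then the order super commuting graph Δ^o(D_{2n}) is the complete graph on 2n vertices, i.e., every pair of distinct elements of D_{2n} is adjacent in Δ^o(D_{2n}). -/
/-!
For even `n > 0` the rotations already realise every element order of `D_{2n}`: they form a cyclic
group of order `n`, and since `2 ∣ n` one of them has order `2`, the order of every reflection. As
rotations commute with each other, any two orders are realised by commuting elements.
-/

open Polynomial

noncomputable section
open scoped Classical

theorem orderSuper_adj_of_commute {G : Type*} [Group G] {x y x' y' : G} (hxy : x ≠ y)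
    (hcomm : Commute x' y') (hx : orderOf x' = orderOf x) (hy : orderOf y' = orderOf y) :
    (orderSuper G).Adj x y := by
  refine (SimpleGraph.fromRel_adj _ _ _).mpr ⟨hxy, Or.inl ?_⟩
  refine or_iff_not_imp_left.mpr fun horder ↦ ⟨x', y', ?_, hcomm, hx, hy⟩
  rintro rfl
  exact horder (hx.symm.trans hy)

theorem commute_r_r {n : ℕ} (i j : ZMod n) :
    Commute (DihedralGroup.r i) (DihedralGroup.r j) := by
  rw [commute_iff_eq, DihedralGroup.r_mul_r, DihedralGroup.r_mul_r, add_comm]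

theorem exists_orderOf_r_eq_of_dvd {n d : ℕ} [NeZero n] (hd : d ∣ n) :
    ∃ i : ZMod n, orderOf (DihedralGroup.r i) = d := by
  refine ⟨(n / d : ℕ), ?_⟩
  have horder : orderOf (DihedralGroup.r 1 : DihedralGroup n) = n := DihedralGroup.orderOf_r_one
  rw [← DihedralGroup.r_one_pow]
  simpa only [horder] using
    orderOf_pow_orderOf_div (horder.trans_ne (NeZero.ne n)) (horder.symm ▸ hd)

theorem exists_orderOf_r_eq_orderOf {n : ℕ} [NeZero n] (heven : Even n) (x : DihedralGroup n) :
    ∃ i : ZMod n, orderOf (DihedralGroup.r i) = orderOf x := by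
  cases x with
  | r i => exact ⟨i, rfl⟩
  | sr i =>
    rw [DihedralGroup.orderOf_sr]
    exact exists_orderOf_r_eq_of_dvd heven.two_dvd

/-- For even `n ≥ 4`, the order super commuting graph of the dihedral group `D_{2n}` is
complete: every pair of distinct elements is adjacent. -/
theorem stmt_17 (n : ℕ) (hn : 4 ≤ n) (heven : Even n) :
    ∀ x y : DihedralGroup n, x ≠ y → (orderSuper (DihedralGroup n)).Adj x y := by
  intro x y hxy
  have : NeZero n := ⟨by lia⟩
  obtain ⟨i, hi⟩ := exists_orderOf_r_eq_orderOf heven x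
  obtain ⟨j, hj⟩ := exists_orderOf_r_eq_orderOf heven y
  exact orderSuper_adj_of_commute hxy (commute_r_r i j) hi hj
end
end

section
/- Let n ≥ 2 be even and let Q_{4n} be the generalized quaternion (dicyclic) group of order 4n. Then the order super commuting graph Δ^o(Q_{4n}) is the complete graph on 4n vertices, i.e., every pair of distinct elements of Q_{4n} is adjacent in Δ^o(Q_{4n}). -/
/-!
Two elements are adjacent in `Δ^o(G)` as soon as their orders are realized by commuting elements,
so `Δ^o(G)` is complete whenever a commuting subset of `G` realizes every element order. In
`Q_{4n}` with `n` even, `⟨a⟩` is such a subset: the elements outside `⟨a⟩` all have order `4`, and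
so does `a ^ (n / 2)`.
-/

open Polynomial

noncomputable section
open scoped Classical

section OrderSuper

variable {G : Type*} [Group G]

-- The clause `x' ≠ y'` may be dropped: commuting representatives that coincide force equal orders.
theorem orderSuper_adj_iff {x y : G} :
    (orderSuper G).Adj x y ↔
      x ≠ y ∧ ∃ x' y' : G, Commute x' y' ∧ orderOf x' = orderOf x ∧ orderOf y' = orderOf y := by
  rw [orderSuper, SimpleGraph.fromRel_adj]
  refine and_congr_right fun _ => ⟨?_, ?_⟩
  · rintro ((hord | ⟨x', y', -, hcomm, hx, hy⟩) | (hord | ⟨y', x', -, hcomm, hy, hx⟩))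
    · exact ⟨x, x, .refl x, rfl, hord⟩
    · exact ⟨x', y', hcomm, hx, hy⟩
    · exact ⟨x, x, .refl x, rfl, hord.symm⟩
    · exact ⟨x', y', hcomm.symm, hx, hy⟩
  · rintro ⟨x', y', hcomm, hx, hy⟩
    obtain rfl | hne := eq_or_ne x' y'
    · exact .inl (.inl (hx.symm.trans hy))
    · exact .inl (.inr ⟨x', y', hne, hcomm, hx, hy⟩)

theorem orderSuper_eq_top_of_pairwise_commute {S : Set G} (hcomm : S.Pairwise Commute)
    (hord : ∀ x : G, orderOf x ∈ orderOf '' S) : orderSuper G = ⊤ := by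
  ext x y
  rw [SimpleGraph.top_adj, orderSuper_adj_iff, and_iff_left]
  obtain ⟨x', hx'S, hx'⟩ := hord x
  obtain ⟨y', hy'S, hy'⟩ := hord y
  exact ⟨x', y', hcomm.of_refl hx'S hy'S, hx', hy'⟩

end OrderSuper

section Quaternion

variable {n : ℕ}

theorem quaternionGroup_commute_a (i j : ZMod (2 * n)) :
    Commute (QuaternionGroup.a i) (QuaternionGroup.a j) :=
  congrArg QuaternionGroup.a (add_comm i j)

theorem quaternionGroup_orderOf_a_natCast_of_dvd {k : ℕ} (hk : k ≠ 0) (hdvd : k ∣ 2 * n) :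
    orderOf (QuaternionGroup.a (k : ZMod (2 * n))) = 2 * n / k := by
  rw [← QuaternionGroup.a_one_pow, orderOf_pow_of_dvd hk (by rwa [QuaternionGroup.orderOf_a_one]),
    QuaternionGroup.orderOf_a_one]

theorem quaternionGroup_orderOf_mem_image_range_a [NeZero n] (heven : Even n)
    (x : QuaternionGroup n) : orderOf x ∈ orderOf '' Set.range (QuaternionGroup.a (n := n)) := by
  cases x with
  | a i => exact Set.mem_image_of_mem _ (Set.mem_range_self i)
  | xa i =>
    obtain ⟨m, hm⟩ := heven
    have hm₀ : m ≠ 0 := by have := NeZero.ne n; omega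
    have hfour : 2 * n = 4 * m := by omega
    refine ⟨_, Set.mem_range_self (m : ZMod (2 * n)), ?_⟩
    calc orderOf (QuaternionGroup.a (m : ZMod (2 * n)))
        = 2 * n / m := quaternionGroup_orderOf_a_natCast_of_dvd hm₀ (hfour ▸ dvd_mul_left m 4)
      _ = 4 := by rw [hfour, Nat.mul_div_cancel _ (Nat.pos_of_ne_zero hm₀)]
      _ = orderOf (QuaternionGroup.xa i) := (QuaternionGroup.orderOf_xa i).symm

end Quaternion

/-- For even `n ≥ 2`, the order super commuting graph of the generalized quaternion group
`Q_{4n}` is complete: every pair of distinct elements is adjacent. -/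
theorem stmt_18 (n : ℕ) (hn : 2 ≤ n) (heven : Even n) :
    ∀ x y : QuaternionGroup n, x ≠ y → (orderSuper (QuaternionGroup n)).Adj x y := by
  intro x y hxy
  have : NeZero n := ⟨by omega⟩
  have hcomm : (Set.range (QuaternionGroup.a (n := n))).Pairwise Commute := by
    rintro _ ⟨i, rfl⟩ _ ⟨j, rfl⟩ -
    exact quaternionGroup_commute_a i j
  have htop : orderSuper (QuaternionGroup n) = ⊤ :=
    orderSuper_eq_top_of_pairwise_commute hcomm (quaternionGroup_orderOf_mem_image_range_a heven)
  rwa [htop, SimpleGraph.top_adj]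
end
end

section
/- Let m ≥ 2. Then the conjugacy super commuting graph of the dihedral group D_{4m} of order 4m is isomorphic to the conjugacy super commuting graph of the generalized quaternion group Q_{4m} of order 4m: Δ^c(D_{4m}) ≅ Δ^c(Q_{4m}). -/
open Polynomial

noncomputable section
open scoped Classical

/-! The groups `D_{4m}` and `Q_{4m}` have the same multiplication on normal forms, except that in
`Q_{4m}` a product of two elements outside `⟨a⟩` picks up the central involution `a^m`. If `x` and
`y` lie in the same coset of `⟨a⟩`, this factor occurs on both sides of `c * x = y * c` or on
neither; otherwise that equation fails in both groups. So the normal-form bijection preserves and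
reflects `SemiconjBy`, through which both conjugacy and commutation are expressed. -/

section SemiconjBy

variable {G H : Type*} [Group G] [Group H]

theorem isConj_iff_exists_semiconjBy {x y : G} : IsConj x y ↔ ∃ c, SemiconjBy c x y := by
  simp only [isConj_iff, SemiconjBy, mul_inv_eq_iff_eq_mul]

theorem isConj_map_iff_of_semiconjBy_map_iff {f : G → H} (hf : Function.Surjective f)
    (hsemi : ∀ c x y, SemiconjBy (f c) (f x) (f y) ↔ SemiconjBy c x y) (x y : G) :
    IsConj (f x) (f y) ↔ IsConj x y := by
  simp only [isConj_iff_exists_semiconjBy, hf.exists, hsemi]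

/-- The isomorphism of conjugacy super commuting graphs induced by a bijection that preserves and
reflects the relation `c * x = y * c`; the bijection need not be a homomorphism. -/
def conjSuperIsoOfSemiconjBy (e : G ≃ H)
    (hsemi : ∀ c x y, SemiconjBy (e c) (e x) (e y) ↔ SemiconjBy c x y) :
    conjSuper G ≃g conjSuper H where
  toEquiv := e
  map_rel_iff' {x y} := by
    have hconj := isConj_map_iff_of_semiconjBy_map_iff e.surjective hsemi
    have hcomm (x y : G) : e x * e y = e y * e x ↔ x * y = y * x := hsemi x y y
    simp only [conjSuper, SimpleGraph.fromRel_adj, e.surjective.exists, hconj, hcomm,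
      e.injective.ne_iff]

end SemiconjBy

/-- The normal-form bijection `D_{4m} → Q_{4m}`, sending rotations to powers of `a`; for `m ≥ 1`
it is not a group homomorphism. -/
def dihedralEquivQuaternion (m : ℕ) : DihedralGroup (2 * m) ≃ QuaternionGroup m where
  toFun
    | .r i => .a i
    | .sr i => .xa i
  invFun
    | .a i => .r i
    | .xa i => .sr i
  left_inv := by rintro (i | i) <;> rfl
  right_inv := by rintro (i | i) <;> rfl

namespace dihedralEquivQuaternion

open DihedralGroup QuaternionGroup

variable {m : ℕ}

@[simp]
theorem apply_r (i : ZMod (2 * m)) : dihedralEquivQuaternion m (r i) = a i := rfl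

@[simp]
theorem apply_sr (i : ZMod (2 * m)) : dihedralEquivQuaternion m (sr i) = xa i := rfl

theorem map_r_mul (i : ZMod (2 * m)) (x : DihedralGroup (2 * m)) :
    dihedralEquivQuaternion m (r i * x) =
      dihedralEquivQuaternion m (r i) * dihedralEquivQuaternion m x := by
  cases x <;> simp

theorem map_mul_r (x : DihedralGroup (2 * m)) (i : ZMod (2 * m)) :
    dihedralEquivQuaternion m (x * r i) =
      dihedralEquivQuaternion m x * dihedralEquivQuaternion m (r i) := by
  cases x <;> simp

theorem a_mul_map_sr_mul_sr (i j : ZMod (2 * m)) :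
    a m * dihedralEquivQuaternion m (sr i * sr j) =
      dihedralEquivQuaternion m (sr i) * dihedralEquivQuaternion m (sr j) := by
  simp [add_sub_assoc]

theorem semiconjBy_map_iff (c x y : DihedralGroup (2 * m)) :
    SemiconjBy (dihedralEquivQuaternion m c) (dihedralEquivQuaternion m x)
        (dihedralEquivQuaternion m y) ↔
      SemiconjBy c x y := by
  unfold SemiconjBy
  rcases x with i | i <;> rcases y with j | j
  case r.r => rw [← map_mul_r, ← map_r_mul, EmbeddingLike.apply_eq_iff_eq]
  case r.sr | sr.r => cases c <;> simp
  case sr.sr =>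
    rcases c with k | k
    · rw [← map_r_mul, ← map_mul_r, EmbeddingLike.apply_eq_iff_eq]
    · rw [← a_mul_map_sr_mul_sr, ← a_mul_map_sr_mul_sr, mul_right_inj,
        EmbeddingLike.apply_eq_iff_eq]

end dihedralEquivQuaternion

/-- For `m ≥ 2`, the conjugacy super commuting graph of the dihedral group `D_{4m}` is
isomorphic to the conjugacy super commuting graph of the generalized quaternion group
`Q_{4m}`. -/
theorem stmt_19 (m : ℕ) (hm : 2 ≤ m) :
    Nonempty (conjSuper (DihedralGroup (2 * m)) ≃g conjSuper (QuaternionGroup m)) :=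
  ⟨conjSuperIsoOfSemiconjBy (dihedralEquivQuaternion m)
    dihedralEquivQuaternion.semiconjBy_map_iff⟩
end
end
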